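/- The classical-limit (q = 1) operators satisfy the defining relations of the Lie superalgebra gl(2/1): [E11, E22] = [E11, E33] = [E22, E33] = 0; [E11, E12] = E12, [E22, E12] = −E12, [E22, E23] = E23, [E33, E23] = −E23, [E11, E21] = −E21, [E22, E21] = E21, [E22, E32] = −E32, [E33, E32] = E32, [E11, E23] = [E11, E32] = 0; [E12, E32] = 0 and [E21, E23] = 0; E12 E21 − E21 E12 = E11 − E22 and E23 E32 + E32 E23 = E22 + E33 as operators; and E23 ∘ E23 = 0, E32 ∘ E32 = 0. Hence these operators define a finite-dimensional representation of gl(2/1), and the matrix elements of the U_q[gl(2/1)] representation reduce to it at q = 1. -/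

import Mathlib

noncomputable section

/-- The triple `(m12, m22, m32)` attached to the sector `k ∈ {0,1,2,3}`. -/
def trip (m13 m23 m33 : ℤ) : Fin 4 → ℤ × ℤ × ℤ
  | 0 => (m13, m23, m33)
  | 1 => (m13, m23 - 1, m33 + 1)
  | 2 => (m13 - 1, m23, m33 + 1)
  | 3 => (m13 - 1, m23 - 1, m33 + 2)

def M12 (m13 m23 m33 : ℤ) (k : Fin 4) : ℤ := (trip m13 m23 m33 k).1
def M22 (m13 m23 m33 : ℤ) (k : Fin 4) : ℤ := (trip m13 m23 m33 k).2.1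
def M32 (m13 m23 m33 : ℤ) (k : Fin 4) : ℤ := (trip m13 m23 m33 k).2.2

/-- `m11` is in the allowed range `m22 ≤ m11 ≤ m12` of the sector `k`. -/
def InR (m13 m23 m33 : ℤ) (k : Fin 4) (x : ℤ) : Prop :=
  M22 m13 m23 m33 k ≤ x ∧ x ≤ M12 m13 m23 m33 k

instance (m13 m23 m33 : ℤ) (k : Fin 4) (x : ℤ) : Decidable (InR m13 m23 m33 k x) :=
  instDecidableAnd

/-- The index set of the basis `v(k, m11)` of `W`. -/
abbrev Idx (m13 m23 m33 : ℤ) : Type :=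
  {p : Fin 4 × ℤ // InR m13 m23 m33 p.1 p.2}

/-- The module `W`, realized as the free complex vector space on the basis
`v(k, m11)`, `k ∈ {0,1,2,3}`, `m22 ≤ m11 ≤ m12`. -/
abbrev Wsp (m13 m23 m33 : ℤ) : Type := Idx m13 m23 m33 →₀ ℂ

/-- The basis vector `v(k, m11)` (zero if `m11` is out of range). -/
def bv (m13 m23 m33 : ℤ) (k : Fin 4) (x : ℤ) : Wsp m13 m23 m33 :=
  if h : InR m13 m23 m33 k x then Finsupp.single ⟨(k, x), h⟩ 1 else 0

/-- The classical limit (`q = 1`) of the Gel'fand--Zetlin realization of the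
induced module `W([m13,m23,m33])` of `gl(2/1)`: seven linear operators acting
on the basis `v(k, m11)` by the `q = 1` specialization of the
induced-representation formulas (terms with `m11` out of range being `0`). -/
structure GZ1 (m13 m23 m33 : ℤ) where
  E11 : Wsp m13 m23 m33 →ₗ[ℂ] Wsp m13 m23 m33
  E22 : Wsp m13 m23 m33 →ₗ[ℂ] Wsp m13 m23 m33
  E33 : Wsp m13 m23 m33 →ₗ[ℂ] Wsp m13 m23 m33
  E12 : Wsp m13 m23 m33 →ₗ[ℂ] Wsp m13 m23 m33
  E21 : Wsp m13 m23 m33 →ₗ[ℂ] Wsp m13 m23 m33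
  E23 : Wsp m13 m23 m33 →ₗ[ℂ] Wsp m13 m23 m33
  E32 : Wsp m13 m23 m33 →ₗ[ℂ] Wsp m13 m23 m33
  hE11 : ∀ (k : Fin 4) (x : ℤ), InR m13 m23 m33 k x →
    E11 (bv m13 m23 m33 k x) = (x : ℂ) • bv m13 m23 m33 k x
  hE22 : ∀ (k : Fin 4) (x : ℤ), InR m13 m23 m33 k x →
    E22 (bv m13 m23 m33 k x) =
      ((M12 m13 m23 m33 k + M22 m13 m23 m33 k - x : ℤ) : ℂ) • bv m13 m23 m33 k x
  hE33 : ∀ (k : Fin 4) (x : ℤ), InR m13 m23 m33 k x →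
    E33 (bv m13 m23 m33 k x) = ((M32 m13 m23 m33 k : ℤ) : ℂ) • bv m13 m23 m33 k x
  hE12 : ∀ (k : Fin 4) (x : ℤ), InR m13 m23 m33 k x →
    E12 (bv m13 m23 m33 k x) =
      ((Real.sqrt (((M12 m13 m23 m33 k - x : ℤ) : ℝ) *
          ((x - M22 m13 m23 m33 k + 1 : ℤ) : ℝ)) : ℝ) : ℂ) • bv m13 m23 m33 k (x + 1)
  hE21 : ∀ (k : Fin 4) (x : ℤ), InR m13 m23 m33 k x →
    E21 (bv m13 m23 m33 k x) =
      ((Real.sqrt (((M12 m13 m23 m33 k - x + 1 : ℤ) : ℝ) *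
          ((x - M22 m13 m23 m33 k : ℤ) : ℝ)) : ℝ) : ℂ) • bv m13 m23 m33 k (x - 1)
  hE23₀ : ∀ x : ℤ, InR m13 m23 m33 0 x → E23 (bv m13 m23 m33 0 x) = 0
  hE23₁ : ∀ x : ℤ, InR m13 m23 m33 1 x →
    E23 (bv m13 m23 m33 1 x) =
      ((Real.sqrt (((x - m23 + 1 : ℤ) : ℝ) / ((m13 - m23 + 1 : ℤ) : ℝ)) *
          ((m23 + m33 : ℤ) : ℝ) : ℝ) : ℂ) • bv m13 m23 m33 0 x
  hE23₂ : ∀ x : ℤ, InR m13 m23 m33 2 x →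
    E23 (bv m13 m23 m33 2 x) =
      ((Real.sqrt (((m13 - x : ℤ) : ℝ) / ((m13 - m23 : ℤ) : ℝ)) *
          ((m13 + m33 + 1 : ℤ) : ℝ) : ℝ) : ℂ) • bv m13 m23 m33 0 x
  hE23₃ : ∀ x : ℤ, InR m13 m23 m33 3 x →
    E23 (bv m13 m23 m33 3 x) =
      ((Real.sqrt (((m13 - x : ℤ) : ℝ) / ((m13 - m23 + 1 : ℤ) : ℝ)) *
          ((m13 + m33 + 1 : ℤ) : ℝ) : ℝ) : ℂ) • bv m13 m23 m33 1 x
        - ((Real.sqrt (((x - m23 + 1 : ℤ) : ℝ) * ((m13 - m23 : ℤ) : ℝ)) *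
            (((m23 + m33 : ℤ) : ℝ) / ((m13 - m23 + 1 : ℤ) : ℝ)) : ℝ) : ℂ) •
              bv m13 m23 m33 2 x
  hE32₀ : ∀ x : ℤ, InR m13 m23 m33 0 x →
    E32 (bv m13 m23 m33 0 x) =
      ((Real.sqrt (((x - m23 + 1 : ℤ) : ℝ) / ((m13 - m23 + 1 : ℤ) : ℝ)) : ℝ) : ℂ) •
          bv m13 m23 m33 1 x
        + ((Real.sqrt (((m13 - x : ℤ) : ℝ) * ((m13 - m23 : ℤ) : ℝ)) /
            ((m13 - m23 + 1 : ℤ) : ℝ) : ℝ) : ℂ) • bv m13 m23 m33 2 x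
  hE32₁ : ∀ x : ℤ, InR m13 m23 m33 1 x →
    E32 (bv m13 m23 m33 1 x) =
      ((Real.sqrt (((m13 - x : ℤ) : ℝ) / ((m13 - m23 + 1 : ℤ) : ℝ)) : ℝ) : ℂ) •
        bv m13 m23 m33 3 x
  hE32₂ : ∀ x : ℤ, InR m13 m23 m33 2 x →
    E32 (bv m13 m23 m33 2 x) =
      -(((Real.sqrt (((x - m23 + 1 : ℤ) : ℝ) / ((m13 - m23 : ℤ) : ℝ)) : ℝ) : ℂ) •
        bv m13 m23 m33 3 x)
  hE32₃ : ∀ x : ℤ, InR m13 m23 m33 3 x → E32 (bv m13 m23 m33 3 x) = 0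

/-!
A linear map on `W` is determined by the vectors `v(k, x)`, and the defining formulas, assumed only
for `x` in range, hold for every integer `x`: if the source vector is out of range and a target
vector is not, the coefficient contains the square root of `0`.

The operators `E11`, `E22`, `E33` are diagonal, so their commutators with the other operators only
record how the eigenvalues change from source to target. For the remaining relations write
`α = √(x - m23 + 1)`, `β = √(m13 - x)`, `δ = √(m13 - m23)`, `ρ = √(m13 - m23 + 1)`. All matrix
elements are monomials in such square roots, which makes `[E12, E32] = [E21, E23] = 0` evident,
while `{E23, E32} = E22 + E33` reduces to
`α² (m23 + m33) + β² (m13 + m33 + 1) = ρ² (m13 + m23 + m33 - x)`.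
-/

/-- The square root of an integer as a complex number, in terms of which all matrix elements are
written; it is `0` on negative integers. -/
def sqrtC (n : ℤ) : ℂ := (√(n : ℝ) : ℝ)

lemma sqrtC_of_nonpos {n : ℤ} (hn : n ≤ 0) : sqrtC n = 0 := by
  rw [sqrtC, Real.sqrt_eq_zero_of_nonpos (by exact_mod_cast hn), Complex.ofReal_zero]

lemma sq_sqrtC {n : ℤ} (hn : 0 ≤ n) : sqrtC n ^ 2 = n := by
  rw [sqrtC, ← Complex.ofReal_pow, Real.sq_sqrt (by exact_mod_cast hn), Complex.ofReal_intCast]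

lemma sub_add_one_eq_sq_sqrtC {m n : ℤ} (h : n ≤ m + 1) :
    (m - n + 1 : ℂ) = sqrtC (m - n + 1) ^ 2 := by
  rw [sq_sqrtC (by omega)]
  push_cast
  rfl

lemma sqrtC_ne_zero {n : ℤ} (hn : 0 < n) : sqrtC n ≠ 0 :=
  Complex.ofReal_ne_zero.2 (Real.sqrt_ne_zero'.2 (by exact_mod_cast hn))

lemma ofReal_sqrt_mul {a : ℤ} (ha : 0 ≤ a) (b : ℤ) :
    ((√((a : ℝ) * (b : ℝ)) : ℝ) : ℂ) = sqrtC a * sqrtC b := by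
  rw [Real.sqrt_mul (by exact_mod_cast ha), Complex.ofReal_mul, sqrtC, sqrtC]

lemma ofReal_sqrt_div {a : ℤ} (ha : 0 ≤ a) (b : ℤ) :
    ((√((a : ℝ) / (b : ℝ)) : ℝ) : ℂ) = sqrtC a / sqrtC b := by
  rw [Real.sqrt_div (by exact_mod_cast ha), Complex.ofReal_div, sqrtC, sqrtC]

/-- This is what makes the junk value `1 / √0 = 0` harmless when `m13 = m23`. -/
lemma sqrtC_mul_div_cancel {m n : ℤ} (h : m ≤ n) : sqrtC m * sqrtC n / sqrtC n = sqrtC m := by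
  rcases le_or_gt n 0 with hn | hn
  · rw [sqrtC_of_nonpos (h.trans hn), zero_mul, zero_div]
  · rw [mul_div_cancel_right₀ _ (sqrtC_ne_zero hn)]

lemma anticommutator_coeff {m13 m23 m33 x : ℤ} (hm : m23 ≤ m13) (hlo : m23 - 1 ≤ x)
    (hhi : x ≤ m13) :
    (sqrtC (x - m23 + 1) ^ 2 * (m23 + m33) + sqrtC (m13 - x) ^ 2 * (m13 + m33 + 1)) /
      (m13 - m23 + 1) = (m13 + m23 + m33 - x : ℂ) := by
  have hd : (m13 - m23 + 1 : ℂ) ≠ 0 := by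
    have : m13 - m23 + 1 ≠ 0 := by omega
    exact_mod_cast this
  rw [sq_sqrtC (by omega), sq_sqrtC (by omega), div_eq_iff hd]
  push_cast
  ring

section Operators

variable {m13 m23 m33 : ℤ}

lemma inR_zero {x : ℤ} : InR m13 m23 m33 0 x ↔ m23 ≤ x ∧ x ≤ m13 := Iff.rfl

lemma inR_one {x : ℤ} : InR m13 m23 m33 1 x ↔ m23 - 1 ≤ x ∧ x ≤ m13 := Iff.rfl

lemma inR_two {x : ℤ} : InR m13 m23 m33 2 x ↔ m23 ≤ x ∧ x ≤ m13 - 1 := Iff.rfl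

lemma inR_three {x : ℤ} : InR m13 m23 m33 3 x ↔ m23 - 1 ≤ x ∧ x ≤ m13 - 1 := Iff.rfl

lemma bv_of_not_inR {k : Fin 4} {x : ℤ} (h : ¬ InR m13 m23 m33 k x) : bv m13 m23 m33 k x = 0 :=
  dif_neg h

lemma smul_bv_eq_zero {k : Fin 4} {x : ℤ} {c : ℂ} (h : InR m13 m23 m33 k x → c = 0) :
    c • bv m13 m23 m33 k x = 0 := by
  by_cases hx : InR m13 m23 m33 k x
  · rw [h hx, zero_smul]
  · rw [bv_of_not_inR hx, smul_zero]

lemma map_bv_eq {f : Module.End ℂ (Wsp m13 m23 m33)} {k : Fin 4} {x : ℤ} {w : Wsp m13 m23 m33}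
    (h_in : InR m13 m23 m33 k x → f (bv m13 m23 m33 k x) = w)
    (h_out : ¬ InR m13 m23 m33 k x → w = 0) : f (bv m13 m23 m33 k x) = w := by
  by_cases hx : InR m13 m23 m33 k x
  · exact h_in hx
  · rw [bv_of_not_inR hx, map_zero, h_out hx]

lemma end_ext_bv {f g : Module.End ℂ (Wsp m13 m23 m33)}
    (h : ∀ k x, InR m13 m23 m33 k x → f (bv m13 m23 m33 k x) = g (bv m13 m23 m33 k x)) :
    f = g := by
  refine Finsupp.lhom_ext' fun ⟨⟨k, x⟩, hx⟩ => LinearMap.ext_ring ?_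
  have hkx := h k x hx
  rwa [bv, dif_pos hx] at hkx

lemma end_ext_sectors {f g : Module.End ℂ (Wsp m13 m23 m33)}
    (h₀ : ∀ x, m23 ≤ x → x ≤ m13 → f (bv m13 m23 m33 0 x) = g (bv m13 m23 m33 0 x))
    (h₁ : ∀ x, m23 - 1 ≤ x → x ≤ m13 → f (bv m13 m23 m33 1 x) = g (bv m13 m23 m33 1 x))
    (h₂ : ∀ x, m23 ≤ x → x ≤ m13 - 1 → f (bv m13 m23 m33 2 x) = g (bv m13 m23 m33 2 x))
    (h₃ : ∀ x, m23 - 1 ≤ x → x ≤ m13 - 1 → f (bv m13 m23 m33 3 x) = g (bv m13 m23 m33 3 x)) :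
    f = g :=
  end_ext_bv fun k x ⟨hlo, hhi⟩ =>
    match k with
    | 0 => h₀ x hlo hhi
    | 1 => h₁ x hlo hhi
    | 2 => h₂ x hlo hhi
    | 3 => h₃ x hlo hhi

/-- `D` is diagonal in the basis `v(k, x)`, with integer eigenvalues `c k x`; this is the property
shared by the Cartan generators `E11`, `E22` and `E33`. -/
def IsDiagonal (D : Module.End ℂ (Wsp m13 m23 m33)) (c : Fin 4 → ℤ → ℤ) : Prop :=
  ∀ k x, InR m13 m23 m33 k x → D (bv m13 m23 m33 k x) = (c k x : ℂ) • bv m13 m23 m33 k x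

/-- The number of odd lowering operators that lead from sector `0` to sector `k`. -/
def oddDegree : Fin 4 → ℤ := ![0, 1, 1, 2]

lemma oddDegree_zero : oddDegree 0 = 0 := rfl

lemma oddDegree_one : oddDegree 1 = 1 := rfl

lemma oddDegree_two : oddDegree 2 = 1 := rfl

lemma oddDegree_three : oddDegree 3 = 2 := rfl

lemma M32_eq (k : Fin 4) : M32 m13 m23 m33 k = m33 + oddDegree k := by
  fin_cases k <;> simp [M32, trip, oddDegree]

lemma M12_add_M22 (k : Fin 4) :
    M12 m13 m23 m33 k + M22 m13 m23 m33 k = m13 + m23 - oddDegree k := by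
  match k with
  | 0 => exact (sub_zero _).symm
  | 1 => exact (add_sub_assoc m13 m23 1).symm
  | 2 => exact sub_add_eq_add_sub m13 1 m23
  | 3 =>
    change m13 - 1 + (m23 - 1) = m13 + m23 - 2
    ring

namespace IsDiagonal

variable {D D' : Module.End ℂ (Wsp m13 m23 m33)} {c c' : Fin 4 → ℤ → ℤ}

lemma apply_bv (hD : IsDiagonal D c) (k : Fin 4) (x : ℤ) :
    D (bv m13 m23 m33 k x) = (c k x : ℂ) • bv m13 m23 m33 k x :=
  map_bv_eq (hD k x) fun hx => smul_bv_eq_zero fun hx' => absurd hx' hx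

lemma lie_eq_zero (hD : IsDiagonal D c) (hD' : IsDiagonal D' c') : ⁅D, D'⁆ = 0 := by
  refine end_ext_bv fun k x _ => ?_
  simp only [Ring.lie_def, LinearMap.sub_apply, Module.End.mul_apply, LinearMap.zero_apply,
    hD.apply_bv, hD'.apply_bv, map_smul]
  module

lemma lie_eq_zsmul (hD : IsDiagonal D c) {E : Module.End ℂ (Wsp m13 m23 m33)} {s : ℤ}
    (hE : ∀ k x, D (E (bv m13 m23 m33 k x)) = ((c k x + s : ℤ) : ℂ) • E (bv m13 m23 m33 k x)) :
    ⁅D, E⁆ = s • E := by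
  refine end_ext_bv fun k x _ => ?_
  simp only [Ring.lie_def, LinearMap.sub_apply, Module.End.mul_apply, LinearMap.smul_apply,
    hD.apply_bv, hE, map_smul]
  module

end IsDiagonal

namespace GZ1

variable (R : GZ1 m13 m23 m33) (k : Fin 4) (x : ℤ)

lemma isDiagonal_E11 : IsDiagonal R.E11 fun _ x => x := R.hE11

lemma isDiagonal_E22 : IsDiagonal R.E22 fun k x => m13 + m23 - oddDegree k - x := by
  simpa only [IsDiagonal, M12_add_M22] using R.hE22

lemma isDiagonal_E33 : IsDiagonal R.E33 fun k _ => m33 + oddDegree k := by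
  simpa only [IsDiagonal, M32_eq] using R.hE33

lemma E12_bv : R.E12 (bv m13 m23 m33 k x) =
    (sqrtC (M12 m13 m23 m33 k - x) * sqrtC (x - M22 m13 m23 m33 k + 1)) •
      bv m13 m23 m33 k (x + 1) := by
  refine map_bv_eq (fun hx => ?_) fun hx => smul_bv_eq_zero fun hx' => ?_ <;> unfold InR at *
  · rw [R.hE12 k x hx, ofReal_sqrt_mul (by omega)]
  · rw [sqrtC_of_nonpos (n := x - _ + 1) (by omega), mul_zero]

lemma E21_bv : R.E21 (bv m13 m23 m33 k x) =
    (sqrtC (M12 m13 m23 m33 k - x + 1) * sqrtC (x - M22 m13 m23 m33 k)) •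
      bv m13 m23 m33 k (x - 1) := by
  refine map_bv_eq (fun hx => ?_) fun hx => smul_bv_eq_zero fun hx' => ?_ <;> unfold InR at *
  · rw [R.hE21 k x hx, ofReal_sqrt_mul (by omega)]
  · rw [sqrtC_of_nonpos (n := _ - x + 1) (by omega), zero_mul]

lemma E23_bv_zero : R.E23 (bv m13 m23 m33 0 x) = 0 :=
  map_bv_eq (R.hE23₀ x) fun _ => rfl

lemma E23_bv_one : R.E23 (bv m13 m23 m33 1 x) =
    (sqrtC (x - m23 + 1) / sqrtC (m13 - m23 + 1) * (m23 + m33)) • bv m13 m23 m33 0 x := by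
  refine map_bv_eq (fun hx => ?_) fun hx => smul_bv_eq_zero fun hx' => ?_ <;>
    rw [inR_one] at hx
  · rw [R.hE23₁ x hx, Complex.ofReal_mul, ofReal_sqrt_div (by omega)]
    push_cast
    rfl
  · rw [inR_zero] at hx'
    omega

lemma E23_bv_two : R.E23 (bv m13 m23 m33 2 x) =
    (sqrtC (m13 - x) / sqrtC (m13 - m23) * (m13 + m33 + 1)) • bv m13 m23 m33 0 x := by
  refine map_bv_eq (fun hx => ?_) fun hx => smul_bv_eq_zero fun hx' => ?_ <;>
    rw [inR_two] at hx
  · rw [R.hE23₂ x hx, Complex.ofReal_mul, ofReal_sqrt_div (by omega)]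
    push_cast
    rfl
  · rw [inR_zero] at hx'
    rw [sqrtC_of_nonpos (by omega), zero_div, zero_mul]

lemma E23_bv_three : R.E23 (bv m13 m23 m33 3 x) =
    (sqrtC (m13 - x) / sqrtC (m13 - m23 + 1) * (m13 + m33 + 1)) • bv m13 m23 m33 1 x -
      (sqrtC (x - m23 + 1) * sqrtC (m13 - m23) * ((m23 + m33) / (m13 - m23 + 1))) •
        bv m13 m23 m33 2 x := by
  refine map_bv_eq (fun hx => ?_) fun hx => ?_ <;> rw [inR_three] at hx
  · rw [R.hE23₃ x hx, Complex.ofReal_mul, Complex.ofReal_mul, ofReal_sqrt_div (by omega),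
      ofReal_sqrt_mul (by omega)]
    push_cast
    rfl
  · rw [smul_bv_eq_zero fun hx' => ?_, smul_bv_eq_zero fun hx' => ?_, sub_zero]
    · rw [inR_two] at hx'
      omega
    · rw [inR_one] at hx'
      rw [sqrtC_of_nonpos (by omega), zero_div, zero_mul]

lemma E32_bv_zero : R.E32 (bv m13 m23 m33 0 x) =
    (sqrtC (x - m23 + 1) / sqrtC (m13 - m23 + 1)) • bv m13 m23 m33 1 x +
      (sqrtC (m13 - x) * sqrtC (m13 - m23) / (m13 - m23 + 1)) • bv m13 m23 m33 2 x := by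
  refine map_bv_eq (fun hx => ?_) fun hx => ?_ <;> rw [inR_zero] at hx
  · rw [R.hE32₀ x hx, Complex.ofReal_div, ofReal_sqrt_div (by omega), ofReal_sqrt_mul (by omega)]
    push_cast
    rfl
  · rw [smul_bv_eq_zero fun hx' => ?_, smul_bv_eq_zero fun hx' => ?_, add_zero]
    · rw [inR_two] at hx'
      omega
    · rw [inR_one] at hx'
      rw [sqrtC_of_nonpos (by omega), zero_div]

lemma E32_bv_one : R.E32 (bv m13 m23 m33 1 x) =
    (sqrtC (m13 - x) / sqrtC (m13 - m23 + 1)) • bv m13 m23 m33 3 x := by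
  refine map_bv_eq (fun hx => ?_) fun hx => smul_bv_eq_zero fun hx' => ?_ <;>
    rw [inR_one] at hx
  · rw [R.hE32₁ x hx, ofReal_sqrt_div (by omega)]
  · rw [inR_three] at hx'
    omega

lemma E32_bv_two : R.E32 (bv m13 m23 m33 2 x) =
    -((sqrtC (x - m23 + 1) / sqrtC (m13 - m23)) • bv m13 m23 m33 3 x) := by
  refine map_bv_eq (fun hx => ?_) fun hx => ?_ <;> rw [inR_two] at hx
  · rw [R.hE32₂ x hx, ofReal_sqrt_div (by omega)]
  · rw [smul_bv_eq_zero fun hx' => ?_, neg_zero]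
    rw [inR_three] at hx'
    rw [sqrtC_of_nonpos (by omega), zero_div]

lemma E32_bv_three : R.E32 (bv m13 m23 m33 3 x) = 0 :=
  map_bv_eq (R.hE32₃ x) fun _ => rfl

section CartanRelations

variable {D : Module.End ℂ (Wsp m13 m23 m33)} {c : Fin 4 → ℤ → ℤ} {s : ℤ}

lemma lie_E12_of_isDiagonal (hD : IsDiagonal D c) (hc : ∀ k x, c k (x + 1) = c k x + s) :
    ⁅D, R.E12⁆ = s • R.E12 := by
  refine hD.lie_eq_zsmul fun k x => ?_
  rw [E12_bv, map_smul, hD.apply_bv, hc, smul_comm]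

lemma lie_E21_of_isDiagonal (hD : IsDiagonal D c) (hc : ∀ k x, c k (x - 1) = c k x + s) :
    ⁅D, R.E21⁆ = s • R.E21 := by
  refine hD.lie_eq_zsmul fun k x => ?_
  rw [E21_bv, map_smul, hD.apply_bv, hc, smul_comm]

lemma lie_E23_of_isDiagonal (hD : IsDiagonal D c)
    (hc : ∀ k x, c k x = c 0 x - oddDegree k * s) : ⁅D, R.E23⁆ = s • R.E23 := by
  refine hD.lie_eq_zsmul fun k x => ?_
  match k with
  | 0 => simp only [E23_bv_zero, map_zero, smul_zero]
  | 1 =>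
    simp only [E23_bv_one, map_smul, hD.apply_bv, hc 1, oddDegree_one]
    push_cast
    module
  | 2 =>
    simp only [E23_bv_two, map_smul, hD.apply_bv, hc 2, oddDegree_two]
    push_cast
    module
  | 3 =>
    simp only [E23_bv_three, map_sub, map_smul, hD.apply_bv, hc 1, hc 2, hc 3, oddDegree_one,
      oddDegree_two, oddDegree_three]
    push_cast
    module

lemma lie_E32_of_isDiagonal (hD : IsDiagonal D c)
    (hc : ∀ k x, c k x = c 0 x + oddDegree k * s) : ⁅D, R.E32⁆ = s • R.E32 := by
  refine hD.lie_eq_zsmul fun k x => ?_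
  match k with
  | 0 =>
    simp only [E32_bv_zero, map_add, map_smul, hD.apply_bv, hc 1, hc 2, oddDegree_one,
      oddDegree_two]
    push_cast
    module
  | 1 =>
    simp only [E32_bv_one, map_smul, hD.apply_bv, hc 1, hc 3, oddDegree_one, oddDegree_three]
    push_cast
    module
  | 2 =>
    simp only [E32_bv_two, map_neg, map_smul, hD.apply_bv, hc 2, hc 3, oddDegree_two,
      oddDegree_three]
    push_cast
    module
  | 3 => simp only [E32_bv_three, map_zero, smul_zero]

lemma lie_E11_E12 : ⁅R.E11, R.E12⁆ = R.E12 := by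
  simpa only [one_zsmul] using R.lie_E12_of_isDiagonal R.isDiagonal_E11 (s := 1) fun _ _ => rfl

lemma lie_E22_E12 : ⁅R.E22, R.E12⁆ = -R.E12 := by
  simpa only [neg_one_zsmul] using
    R.lie_E12_of_isDiagonal R.isDiagonal_E22 (s := -1) fun _ _ => by ring

lemma lie_E11_E21 : ⁅R.E11, R.E21⁆ = -R.E21 := by
  simpa only [neg_one_zsmul] using
    R.lie_E21_of_isDiagonal R.isDiagonal_E11 (s := -1) fun _ _ => rfl

lemma lie_E22_E21 : ⁅R.E22, R.E21⁆ = R.E21 := by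
  simpa only [one_zsmul] using
    R.lie_E21_of_isDiagonal R.isDiagonal_E22 (s := 1) fun _ _ => by ring

lemma lie_E11_E23 : ⁅R.E11, R.E23⁆ = 0 := by
  simpa only [zero_zsmul] using
    R.lie_E23_of_isDiagonal R.isDiagonal_E11 (s := 0) fun _ _ => by ring

lemma lie_E22_E23 : ⁅R.E22, R.E23⁆ = R.E23 := by
  simpa only [one_zsmul] using
    R.lie_E23_of_isDiagonal R.isDiagonal_E22 (s := 1) fun _ _ => by
      rw [oddDegree_zero]
      ring

lemma lie_E33_E23 : ⁅R.E33, R.E23⁆ = -R.E23 := by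
  simpa only [neg_one_zsmul] using
    R.lie_E23_of_isDiagonal R.isDiagonal_E33 (s := -1) fun _ _ => by
      rw [oddDegree_zero]
      ring

lemma lie_E11_E32 : ⁅R.E11, R.E32⁆ = 0 := by
  simpa only [zero_zsmul] using
    R.lie_E32_of_isDiagonal R.isDiagonal_E11 (s := 0) fun _ _ => by ring

lemma lie_E22_E32 : ⁅R.E22, R.E32⁆ = -R.E32 := by
  simpa only [neg_one_zsmul] using
    R.lie_E32_of_isDiagonal R.isDiagonal_E22 (s := -1) fun _ _ => by
      rw [oddDegree_zero]
      ring

lemma lie_E33_E32 : ⁅R.E33, R.E32⁆ = R.E32 := by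
  simpa only [one_zsmul] using
    R.lie_E32_of_isDiagonal R.isDiagonal_E33 (s := 1) fun _ _ => by
      rw [oddDegree_zero]
      ring

end CartanRelations

lemma lie_E12_E21 : ⁅R.E12, R.E21⁆ = R.E11 - R.E22 := by
  refine end_ext_bv fun k x ⟨hlo, hhi⟩ => ?_
  have hβ := sq_sqrtC (n := M12 m13 m23 m33 k - x) (by omega)
  have hβ' := sq_sqrtC (n := M12 m13 m23 m33 k - x + 1) (by omega)
  have hα := sq_sqrtC (n := x - M22 m13 m23 m33 k) (by omega)
  have hα' := sq_sqrtC (n := x - M22 m13 m23 m33 k + 1) (by omega)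
  have e₁ : M12 m13 m23 m33 k - (x - 1) = M12 m13 m23 m33 k - x + 1 := by ring
  have e₂ : x - 1 - M22 m13 m23 m33 k + 1 = x - M22 m13 m23 m33 k := by ring
  have e₃ : M12 m13 m23 m33 k - (x + 1) + 1 = M12 m13 m23 m33 k - x := by ring
  have e₄ : x + 1 - M22 m13 m23 m33 k = x - M22 m13 m23 m33 k + 1 := by ring
  simp only [Ring.lie_def, LinearMap.sub_apply, Module.End.mul_apply, map_smul, E12_bv, E21_bv,
    R.isDiagonal_E11.apply_bv, R.hE22 k x ⟨hlo, hhi⟩, sub_add_cancel, add_sub_cancel_right,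
    e₁, e₂, e₃, e₄]
  match_scalars
  push_cast at hβ hβ' hα hα' ⊢
  linear_combination sqrtC (x - M22 m13 m23 m33 k) ^ 2 * hβ' +
    (M12 m13 m23 m33 k - x + 1) * hα - sqrtC (x - M22 m13 m23 m33 k + 1) ^ 2 * hβ -
    (M12 m13 m23 m33 k - x) * hα'

lemma lie_E12_E32 : ⁅R.E12, R.E32⁆ = 0 := by
  have e₁ (x : ℤ) : x - (m23 - 1) + 1 = x + 1 - m23 + 1 := by ring
  have e₂ (x : ℤ) : m13 - 1 - x = m13 - (x + 1) := by ring
  apply end_ext_sectors <;> intro x _ _ <;>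
    simp only [Ring.lie_def, LinearMap.sub_apply, Module.End.mul_apply, LinearMap.zero_apply,
      map_add, map_neg, map_smul, map_zero, E12_bv, E32_bv_zero, E32_bv_one, E32_bv_two,
      E32_bv_three, M12, M22, trip, e₁, e₂] <;>
    module

lemma lie_E21_E23 : ⁅R.E21, R.E23⁆ = 0 := by
  have e₁ (x : ℤ) : x - 1 - m23 + 1 = x - m23 := by ring
  have e₂ (x : ℤ) : x - (m23 - 1) = x - m23 + 1 := by ring
  have e₃ (x : ℤ) : m13 - 1 - x + 1 = m13 - x := by ring
  have e₄ (x : ℤ) : m13 - (x - 1) = m13 - x + 1 := by ring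
  apply end_ext_sectors <;> intro x _ _ <;>
    simp only [Ring.lie_def, LinearMap.sub_apply, Module.End.mul_apply, LinearMap.zero_apply,
      map_sub, map_smul, map_zero, E21_bv, E23_bv_zero, E23_bv_one, E23_bv_two, E23_bv_three,
      M12, M22, trip, e₁, e₂, e₃, e₄] <;>
    module

lemma E23_mul_E23 : R.E23 * R.E23 = 0 := by
  refine end_ext_sectors (fun x _ _ => ?_) (fun x _ _ => ?_) (fun x _ _ => ?_)
    fun x hlo hhi => ?_ <;> rw [Module.End.mul_apply, LinearMap.zero_apply]
  · simp only [E23_bv_zero, map_zero]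
  · simp only [E23_bv_one, E23_bv_zero, map_smul, smul_zero]
  · simp only [E23_bv_two, E23_bv_zero, map_smul, smul_zero]
  · have hα := sqrtC_mul_div_cancel (m := x - m23 + 1) (n := m13 - m23) (by omega)
    simp only [E23_bv_one, E23_bv_two, E23_bv_three, map_sub, map_smul,
      sub_add_one_eq_sq_sqrtC (m := m13) (n := m23) (by omega)]
    match_scalars
    linear_combination
      -sqrtC (m13 - x) * (m13 + m33 + 1) * (m23 + m33) / sqrtC (m13 - m23 + 1) ^ 2 * hα

lemma E32_mul_E32 : R.E32 * R.E32 = 0 := by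
  refine end_ext_sectors (fun x hlo hhi => ?_) (fun x _ _ => ?_) (fun x _ _ => ?_)
    fun x _ _ => ?_ <;> rw [Module.End.mul_apply, LinearMap.zero_apply]
  · have hβ := sqrtC_mul_div_cancel (m := m13 - x) (n := m13 - m23) (by omega)
    simp only [E32_bv_zero, E32_bv_one, E32_bv_two, map_add, map_smul,
      sub_add_one_eq_sq_sqrtC (m := m13) (n := m23) (by omega)]
    match_scalars
    linear_combination -sqrtC (x - m23 + 1) / sqrtC (m13 - m23 + 1) ^ 2 * hβ
  · simp only [E32_bv_one, E32_bv_three, map_smul, smul_zero]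
  · simp only [E32_bv_two, E32_bv_three, map_neg, map_smul, smul_zero, neg_zero]
  · simp only [E32_bv_three, map_zero]

lemma E22_add_E33_bv :
    (R.E22 + R.E33) (bv m13 m23 m33 k x) = (m13 + m23 + m33 - x : ℂ) • bv m13 m23 m33 k x := by
  rw [LinearMap.add_apply, R.isDiagonal_E22.apply_bv, R.isDiagonal_E33.apply_bv]
  push_cast
  module

lemma E23_mul_E32_add_E32_mul_E23 (hm : m23 ≤ m13) :
    R.E23 * R.E32 + R.E32 * R.E23 = R.E22 + R.E33 := by
  have hρ : (m13 - m23 + 1 : ℂ) = sqrtC (m13 - m23 + 1) ^ 2 := sub_add_one_eq_sq_sqrtC (by omega)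
  refine end_ext_sectors (fun x hlo hhi => ?_) (fun x hlo hhi => ?_) (fun x hlo hhi => ?_)
    fun x hlo hhi => ?_ <;>
    rw [E22_add_E33_bv, ← anticommutator_coeff hm (by omega) (by omega), hρ,
      LinearMap.add_apply, Module.End.mul_apply, Module.End.mul_apply]
  · have hβ := sqrtC_mul_div_cancel (m := m13 - x) (n := m13 - m23) (by omega)
    simp only [E23_bv_zero, E23_bv_one, E23_bv_two, E32_bv_zero, map_add, map_smul, map_zero, hρ]
    match_scalars
    linear_combination sqrtC (m13 - x) * (m13 + m33 + 1) / sqrtC (m13 - m23 + 1) ^ 2 * hβ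
  · simp only [E23_bv_one, E23_bv_three, E32_bv_zero, E32_bv_one, map_smul, hρ]
    module
  · have hδ : sqrtC (m13 - m23) ≠ 0 := sqrtC_ne_zero (by omega)
    simp only [E23_bv_two, E23_bv_three, E32_bv_zero, E32_bv_two, map_neg, map_smul, hρ]
    match_scalars
    · field
    · field
  · have hα := sqrtC_mul_div_cancel (m := x - m23 + 1) (n := m13 - m23) (by omega)
    simp only [E23_bv_three, E32_bv_one, E32_bv_two, E32_bv_three, map_sub, map_smul, map_zero, hρ]
    match_scalars
    linear_combination sqrtC (x - m23 + 1) * (m23 + m33) / sqrtC (m13 - m23 + 1) ^ 2 * hα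

end GZ1

end Operators

/-- The classical-limit (`q = 1`) operators satisfy the defining
relations of the Lie superalgebra `gl(2/1)`:
`[E11,E22] = [E11,E33] = [E22,E33] = 0`; `[E11,E12] = E12`, `[E22,E12] = −E12`,
`[E22,E23] = E23`, `[E33,E23] = −E23`, `[E11,E21] = −E21`, `[E22,E21] = E21`,
`[E22,E32] = −E32`, `[E33,E32] = E32`, `[E11,E23] = [E11,E32] = 0`;
`[E12,E32] = 0` and `[E21,E23] = 0`; `E12 E21 − E21 E12 = E11 − E22` and
`E23 E32 + E32 E23 = E22 + E33` as operators; and `E23 ∘ E23 = 0`,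
`E32 ∘ E32 = 0`. Hence these operators define a finite-dimensional
representation of `gl(2/1)`. -/
theorem stmt_16 (m13 m23 m33 : ℤ) (hm : m23 ≤ m13) (R : GZ1 m13 m23 m33) :
    R.E11 ∘ₗ R.E22 - R.E22 ∘ₗ R.E11 = 0 ∧
    R.E11 ∘ₗ R.E33 - R.E33 ∘ₗ R.E11 = 0 ∧
    R.E22 ∘ₗ R.E33 - R.E33 ∘ₗ R.E22 = 0 ∧
    R.E11 ∘ₗ R.E12 - R.E12 ∘ₗ R.E11 = R.E12 ∧
    R.E22 ∘ₗ R.E12 - R.E12 ∘ₗ R.E22 = -R.E12 ∧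
    R.E22 ∘ₗ R.E23 - R.E23 ∘ₗ R.E22 = R.E23 ∧
    R.E33 ∘ₗ R.E23 - R.E23 ∘ₗ R.E33 = -R.E23 ∧
    R.E11 ∘ₗ R.E21 - R.E21 ∘ₗ R.E11 = -R.E21 ∧
    R.E22 ∘ₗ R.E21 - R.E21 ∘ₗ R.E22 = R.E21 ∧
    R.E22 ∘ₗ R.E32 - R.E32 ∘ₗ R.E22 = -R.E32 ∧
    R.E33 ∘ₗ R.E32 - R.E32 ∘ₗ R.E33 = R.E32 ∧
    R.E11 ∘ₗ R.E23 - R.E23 ∘ₗ R.E11 = 0 ∧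
    R.E11 ∘ₗ R.E32 - R.E32 ∘ₗ R.E11 = 0 ∧
    R.E12 ∘ₗ R.E32 - R.E32 ∘ₗ R.E12 = 0 ∧
    R.E21 ∘ₗ R.E23 - R.E23 ∘ₗ R.E21 = 0 ∧
    R.E12 ∘ₗ R.E21 - R.E21 ∘ₗ R.E12 = R.E11 - R.E22 ∧
    R.E23 ∘ₗ R.E32 + R.E32 ∘ₗ R.E23 = R.E22 + R.E33 ∧
    R.E23 ∘ₗ R.E23 = 0 ∧
    R.E32 ∘ₗ R.E32 = 0 := by
  exact ⟨R.isDiagonal_E11.lie_eq_zero R.isDiagonal_E22,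
    R.isDiagonal_E11.lie_eq_zero R.isDiagonal_E33,
    R.isDiagonal_E22.lie_eq_zero R.isDiagonal_E33,
    R.lie_E11_E12, R.lie_E22_E12, R.lie_E22_E23, R.lie_E33_E23, R.lie_E11_E21, R.lie_E22_E21,
    R.lie_E22_E32, R.lie_E33_E32, R.lie_E11_E23, R.lie_E11_E32, R.lie_E12_E32, R.lie_E21_E23,
    R.lie_E12_E21, R.E23_mul_E32_add_E32_mul_E23 hm, R.E23_mul_E23, R.E32_mul_E32⟩
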